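/- arXiv:1912.13501 — 2 statements merged into one kernel-verified Lean document; each statement's English description precedes it below -/
import Mathlib

section
/- (Converse part of Theorem 2, common randomness bound.) In the MM-SPIR model (with all constraints), the entropy of the common randomness satisfies H(S) ≥ P·L / (N−1). -/
open Finset

namespace MMSPIR

variable {Ω : Type} [Fintype Ω]

/-- Probability that the random variable `X` takes the value `v`,
under the weight function `p` on the finite sample space `Ω`. -/
noncomputable def prob (p : Ω → ℝ) {V : Type} [DecidableEq V] (X : Ω → V) (v : V) : ℝ :=
  ∑ ω ∈ Finset.univ.filter (fun ω => X ω = v), p ω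

/-- Shannon entropy of `X`, with logarithm taken to base `q`. -/
noncomputable def ent (q : ℕ) (p : Ω → ℝ) {V : Type} [Fintype V] [DecidableEq V]
    (X : Ω → V) : ℝ :=
  -∑ v : V, prob p X v * Real.logb q (prob p X v)

/-- Conditional entropy `H(X | Y)`, base `q`. -/
noncomputable def cent (q : ℕ) (p : Ω → ℝ) {V W : Type} [Fintype V] [DecidableEq V]
    [Fintype W] [DecidableEq W] (X : Ω → V) (Y : Ω → W) : ℝ :=
  ent q p (fun ω => (X ω, Y ω)) - ent q p Y

/-- Mutual information `I(X ; Y)`, base `q`. -/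
noncomputable def mi (q : ℕ) (p : Ω → ℝ) {V W : Type} [Fintype V] [DecidableEq V]
    [Fintype W] [DecidableEq W] (X : Ω → V) (Y : Ω → W) : ℝ :=
  ent q p X + ent q p Y - ent q p (fun ω => (X ω, Y ω))

/-- Conditional mutual information `I(X ; Y | Z)`, base `q`. -/
noncomputable def cmi (q : ℕ) (p : Ω → ℝ) {U V W : Type} [Fintype U] [DecidableEq U]
    [Fintype V] [DecidableEq V] [Fintype W] [DecidableEq W]
    (X : Ω → U) (Y : Ω → V) (Z : Ω → W) : ℝ :=
  cent q p X Z + cent q p Y Z - cent q p (fun ω => (X ω, Y ω)) Z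

/-- `X` and `Y` have the same distribution. -/
def IdentDist (p : Ω → ℝ) {V : Type} [DecidableEq V] (X Y : Ω → V) : Prop :=
  ∀ v, prob p X v = prob p Y v

/-!
Fix a demand `𝒫`, a message index `k` and a database `n`. Some demand of the same size omits `k`.
Under that demand the retrieved messages are functions of the user's view, which by database
privacy is independent of the others, so `W_k` is independent of all other messages together with
the view. User privacy carries this over to the query and answer of database `n` under `𝒫`, and the
chain rule over `k` makes all the messages jointly independent of `(Q_n, A_n)`.

Given the query and the messages, `A_n` is a function of `S`, so `H(A_n | F) ≤ H(A_n | Q_n) ≤ H(S)`;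
moreover `(A_n, F)` is still independent of the messages. One answer is thus useless on its own, and
the `P` desired messages come from the other `N - 1` answers, whose joint conditional entropy is at
most `(N - 1) H(S)`.
-/

section Prob

variable {p : Ω → ℝ} {α β γ : Type} [DecidableEq α] [DecidableEq β] [DecidableEq γ]

lemma prob_nonneg (hp : ∀ ω, 0 ≤ p ω) (X : Ω → α) (x : α) : 0 ≤ prob p X x :=
  sum_nonneg fun ω _ => hp ω

lemma prob_apply_pos (hp : ∀ ω, 0 ≤ p ω) (X : Ω → α) {ω : Ω} (hω : 0 < p ω) :
    0 < prob p X (X ω) :=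
  hω.trans_le <| single_le_sum (f := p) (fun a _ => hp a) (by simp)

lemma prob_apply_le_of_factorsThrough (hp : ∀ ω, 0 ≤ p ω) {X : Ω → α} {Z : Ω → β}
    (h : Z.FactorsThrough X) (ω : Ω) : prob p X (X ω) ≤ prob p Z (Z ω) :=
  sum_le_sum_of_subset_of_nonneg (monotone_filter_right _ fun _ _ ha => h ha) fun a _ _ => hp a

lemma sum_prob_mul [Fintype α] (p : Ω → ℝ) (X : Ω → α) (g : α → ℝ) :
    ∑ x, prob p X x * g x = ∑ ω, p ω * g (X ω) := by
  rw [← sum_fiberwise (s := univ) (g := X)]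
  refine sum_congr rfl fun x _ => ?_
  rw [prob, sum_mul]
  exact sum_congr rfl fun ω hω => by rw [(mem_filter.1 hω).2]

lemma sum_prob [Fintype α] (p : Ω → ℝ) (X : Ω → α) : ∑ x, prob p X x = ∑ ω, p ω := by
  simpa only [mul_one] using sum_prob_mul p X fun _ => 1

lemma sum_prob_prodMk [Fintype α] (p : Ω → ℝ) (X : Ω → α) (Y : Ω → β) (y : β) :
    ∑ x, prob p (fun ω => (X ω, Y ω)) (x, y) = prob p Y y := by
  unfold prob
  rw [← sum_fiberwise (s := univ.filter fun ω => Y ω = y) (g := X)]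
  simp only [filter_filter, Prod.mk.injEq, and_comm]

lemma IdentDist.comp [Finite α] {X Y : Ω → α} (h : IdentDist p X Y) (g : α → β) :
    IdentDist p (fun ω => g (X ω)) (fun ω => g (Y ω)) := by
  have := Fintype.ofFinite α
  have prob_comp (Z : Ω → α) (b : β) :
      prob p (fun ω => g (Z ω)) b = ∑ a, prob p Z a * if g a = b then 1 else 0 := by
    rw [sum_prob_mul]
    simp only [prob, sum_filter, mul_ite, mul_one, mul_zero]
  intro b
  simp only [prob_comp, h _]

/-- The likelihood ratio `P(x, z) P(y, z) / (P(x, y, z) P(z))` at the outcome `ω`. The mean of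
its logarithm is `-I(X ; Y | Z)`. -/
noncomputable def probRatio (p : Ω → ℝ) (X : Ω → α) (Y : Ω → β) (Z : Ω → γ) (ω : Ω) : ℝ :=
  prob p (fun ω => (X ω, Z ω)) (X ω, Z ω) * prob p (fun ω => (Y ω, Z ω)) (Y ω, Z ω) /
    (prob p (fun ω => ((X ω, Y ω), Z ω)) ((X ω, Y ω), Z ω) * prob p Z (Z ω))

lemma probRatio_pos (hp : ∀ ω, 0 ≤ p ω) (X : Ω → α) (Y : Ω → β) (Z : Ω → γ) {ω : Ω}
    (hω : 0 < p ω) : 0 < probRatio p X Y Z ω :=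
  div_pos
    (mul_pos (prob_apply_pos hp (fun ω => (X ω, Z ω)) hω)
      (prob_apply_pos hp (fun ω => (Y ω, Z ω)) hω))
    (mul_pos (prob_apply_pos hp (fun ω => ((X ω, Y ω), Z ω)) hω) (prob_apply_pos hp Z hω))

lemma sum_mul_probRatio_le [Finite α] [Finite β] [Finite γ] (hp : ∀ ω, 0 ≤ p ω) (X : Ω → α)
    (Y : Ω → β) (Z : Ω → γ) :
    ∑ ω, p ω * probRatio p X Y Z ω ≤ ∑ ω, p ω := by
  have := Fintype.ofFinite α
  have := Fintype.ofFinite β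
  have := Fintype.ofFinite γ
  set J : Ω → (α × β) × γ := fun ω => ((X ω, Y ω), Z ω)
  set a : α → γ → ℝ := fun x z => prob p (fun ω => (X ω, Z ω)) (x, z)
  set b : β → γ → ℝ := fun y z => prob p (fun ω => (Y ω, Z ω)) (y, z)
  set ratio : (α × β) × γ → ℝ := fun v => a v.1.1 v.2 * b v.1.2 v.2 / (prob p J v * prob p Z v.2)
  have prob_mul_ratio_le (v : (α × β) × γ) :
      prob p J v * ratio v ≤ a v.1.1 v.2 * b v.1.2 v.2 / prob p Z v.2 := by
    rcases (prob_nonneg hp J v).eq_or_lt with h | h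
    · rw [← h, zero_mul]
      exact div_nonneg (mul_nonneg (prob_nonneg hp _ _) (prob_nonneg hp _ _)) (prob_nonneg hp _ _)
    · rw [← mul_div_assoc, mul_div_mul_left _ _ h.ne']
  calc ∑ ω, p ω * ratio (J ω)
      = ∑ v, prob p J v * ratio v := (sum_prob_mul p J ratio).symm
    _ ≤ ∑ v : (α × β) × γ, a v.1.1 v.2 * b v.1.2 v.2 / prob p Z v.2 :=
        sum_le_sum fun v _ => prob_mul_ratio_le v
    _ = ∑ z, (∑ x, a x z) * (∑ y, b y z) / prob p Z z := by
        simp only [Fintype.sum_prod_type_right (α₂ := γ), Fintype.sum_prod_type, sum_mul_sum,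
          sum_div]
    _ = ∑ z, prob p Z z := by simp only [a, b, sum_prob_prodMk, mul_self_div_self]
    _ = ∑ ω, p ω := sum_prob p Z

end Prob

/-- The subfamily `W_T = (W_k)_{k ∈ T}` of a family of random variables, as a single random
variable. -/
abbrev subtuple {Ω ι α : Type} (W : ι → Ω → α) (T : Finset ι) : Ω → T → α :=
  fun ω k => W k ω

lemma subtuple_eq_subtuple_iff {Ω ι α : Type} {W : ι → Ω → α} {T : Finset ι} {a b : Ω} :
    subtuple W T a = subtuple W T b ↔ ∀ k ∈ T, W k a = W k b := by
  simp only [funext_iff, Subtype.forall]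

section Shannon

variable {q : ℕ} {p : Ω → ℝ} {α β γ δ : Type} [Fintype α] [DecidableEq α] [Fintype β]
  [DecidableEq β] [Fintype γ] [DecidableEq γ] [Fintype δ] [DecidableEq δ]

lemma ent_eq_neg_sum (q : ℕ) (p : Ω → ℝ) (X : Ω → α) :
    ent q p X = -∑ ω, p ω * Real.logb q (prob p X (X ω)) := by
  rw [ent, sum_prob_mul p X fun x => Real.logb q (prob p X x)]

lemma IdentDist.ent_eq {X Y : Ω → α} (h : IdentDist p X Y) : ent q p X = ent q p Y := by
  simp only [ent, h _]

lemma IdentDist.mi_comp_eq {τ : Type} [Finite τ] [DecidableEq τ] {X Y : Ω → τ}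
    (h : IdentDist p X Y) (f : τ → α) (g : τ → β) :
    mi q p (fun ω => f (X ω)) (fun ω => g (X ω)) =
      mi q p (fun ω => f (Y ω)) (fun ω => g (Y ω)) := by
  rw [mi, mi, (h.comp f).ent_eq, (h.comp g).ent_eq, (h.comp fun x => (f x, g x)).ent_eq]

lemma ent_const (hp1 : ∑ ω, p ω = 1) (a : α) : ent q p (fun _ => a) = 0 := by
  simp [ent_eq_neg_sum, prob, hp1]

lemma ent_le_of_factorsThrough (hq : 1 < q) (hp : ∀ ω, 0 ≤ p ω) {X : Ω → α} {Z : Ω → β}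
    (h : Z.FactorsThrough X) : ent q p Z ≤ ent q p X := by
  rw [ent_eq_neg_sum, ent_eq_neg_sum, neg_le_neg_iff]
  refine sum_le_sum fun ω _ => ?_
  rcases (hp ω).eq_or_lt with hω | hω
  · simp [← hω]
  · exact mul_le_mul_of_nonneg_left (Real.logb_le_logb_of_le (by exact_mod_cast hq)
      (prob_apply_pos hp X hω) (prob_apply_le_of_factorsThrough hp h ω)) (hp ω)

lemma ent_congr_of_factorsThrough (hq : 1 < q) (hp : ∀ ω, 0 ≤ p ω) {X : Ω → α} {Z : Ω → β}
    (hZ : Z.FactorsThrough X) (hX : X.FactorsThrough Z) : ent q p Z = ent q p X :=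
  (ent_le_of_factorsThrough hq hp hZ).antisymm (ent_le_of_factorsThrough hq hp hX)

lemma sum_mul_logb_nonpos {b : ℝ} (hb : 1 < b) (hp : ∀ ω, 0 ≤ p ω) {r : Ω → ℝ}
    (hr : ∀ ω, 0 < p ω → 0 < r ω) (hle : ∑ ω, p ω * r ω ≤ ∑ ω, p ω) :
    ∑ ω, p ω * Real.logb b (r ω) ≤ 0 := by
  have mul_log_le (ω : Ω) : p ω * Real.log (r ω) ≤ p ω * r ω - p ω := by
    rcases (hp ω).eq_or_lt with hω | hω
    · simp [← hω]
    · linarith [mul_le_mul_of_nonneg_left (Real.log_le_sub_one_of_pos (hr ω hω)) (hp ω)]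
  have sum_mul_log_nonpos : ∑ ω, p ω * Real.log (r ω) ≤ 0 :=
    calc ∑ ω, p ω * Real.log (r ω) ≤ ∑ ω, (p ω * r ω - p ω) := sum_le_sum fun ω _ => mul_log_le ω
      _ ≤ 0 := by rw [sum_sub_distrib]; linarith
  simp only [Real.logb, ← mul_div_assoc, ← sum_div]
  exact div_nonpos_of_nonpos_of_nonneg sum_mul_log_nonpos (Real.log_pos hb).le

lemma cmi_eq_neg_sum (q : ℕ) (hp : ∀ ω, 0 ≤ p ω) (X : Ω → α) (Y : Ω → β) (Z : Ω → γ) :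
    cmi q p X Y Z = -∑ ω, p ω * Real.logb q (probRatio p X Y Z ω) := by
  have mul_logb_probRatio (ω : Ω) : p ω * Real.logb q (probRatio p X Y Z ω) =
      p ω * Real.logb q (prob p (fun ω => (X ω, Z ω)) (X ω, Z ω)) +
        p ω * Real.logb q (prob p (fun ω => (Y ω, Z ω)) (Y ω, Z ω)) -
      (p ω * Real.logb q (prob p (fun ω => ((X ω, Y ω), Z ω)) ((X ω, Y ω), Z ω)) +
        p ω * Real.logb q (prob p Z (Z ω))) := by
    rcases (hp ω).eq_or_lt with hω | hω
    · simp [← hω]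
    · have hXZ := (prob_apply_pos hp (fun ω => (X ω, Z ω)) hω).ne'
      have hYZ := (prob_apply_pos hp (fun ω => (Y ω, Z ω)) hω).ne'
      have hXYZ := (prob_apply_pos hp (fun ω => ((X ω, Y ω), Z ω)) hω).ne'
      have hZ := (prob_apply_pos hp Z hω).ne'
      rw [probRatio, Real.logb_div (mul_ne_zero hXZ hYZ) (mul_ne_zero hXYZ hZ),
        Real.logb_mul hXZ hYZ, Real.logb_mul hXYZ hZ]
      ring
  simp only [cmi, cent, ent_eq_neg_sum, mul_logb_probRatio, sum_sub_distrib, sum_add_distrib]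
  ring

lemma cmi_nonneg (hq : 1 < q) (hp : ∀ ω, 0 ≤ p ω) (X : Ω → α) (Y : Ω → β) (Z : Ω → γ) :
    0 ≤ cmi q p X Y Z := by
  rw [cmi_eq_neg_sum q hp, neg_nonneg]
  exact sum_mul_logb_nonpos (by exact_mod_cast hq) hp (fun ω => probRatio_pos hp X Y Z)
    (sum_mul_probRatio_le hp X Y Z)

lemma ent_submodular (hq : 1 < q) (hp : ∀ ω, 0 ≤ p ω) {X : Ω → α} {Y : Ω → β} {J : Ω → γ}
    {Z : Ω → δ} (hJ : J.FactorsThrough fun ω => (X ω, Y ω)) (hX : Z.FactorsThrough X)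
    (hY : Z.FactorsThrough Y) : ent q p J + ent q p Z ≤ ent q p X + ent q p Y := by
  have hXYZ := cmi_nonneg hq hp X Y Z
  have hJ_le : ent q p J ≤ ent q p fun ω => ((X ω, Y ω), Z ω) :=
    ent_le_of_factorsThrough hq hp fun _ _ h => hJ (congrArg Prod.fst h)
  have hXZ_le : ent q p (fun ω => (X ω, Z ω)) ≤ ent q p X :=
    ent_le_of_factorsThrough hq hp fun _ _ h => Prod.ext h (hX h)
  have hYZ_le : ent q p (fun ω => (Y ω, Z ω)) ≤ ent q p Y :=
    ent_le_of_factorsThrough hq hp fun _ _ h => Prod.ext h (hY h)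
  simp only [cmi, cent] at hXYZ
  linarith

lemma ent_prodMk_le (hq : 1 < q) (hp : ∀ ω, 0 ≤ p ω) (hp1 : ∑ ω, p ω = 1) (X : Ω → α)
    (Y : Ω → β) : ent q p (fun ω => (X ω, Y ω)) ≤ ent q p X + ent q p Y := by
  have h := ent_submodular hq hp (X := X) (Y := Y) (Z := fun _ => ()) (fun _ _ h => h)
    (fun _ _ _ => rfl) fun _ _ _ => rfl
  rwa [ent_const hp1, add_zero] at h

lemma mi_nonneg (hq : 1 < q) (hp : ∀ ω, 0 ≤ p ω) (hp1 : ∑ ω, p ω = 1) (X : Ω → α)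
    (Y : Ω → β) : 0 ≤ mi q p X Y :=
  sub_nonneg.2 (ent_prodMk_le hq hp hp1 X Y)

lemma cent_nonneg (hq : 1 < q) (hp : ∀ ω, 0 ≤ p ω) (X : Ω → α) (Y : Ω → β) :
    0 ≤ cent q p X Y :=
  sub_nonneg.2 (ent_le_of_factorsThrough hq hp fun _ _ h => congrArg Prod.snd h)

lemma cent_const (hq : 1 < q) (hp : ∀ ω, 0 ≤ p ω) (hp1 : ∑ ω, p ω = 1) (X : Ω → α) (b : β) :
    cent q p X (fun _ => b) = ent q p X := by
  have h : ent q p (fun ω => (X ω, b)) = ent q p X :=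
    ent_congr_of_factorsThrough hq hp (fun _ _ h => congrArg (·, b) h)
      fun _ _ h => congrArg Prod.fst h
  rw [cent, h, ent_const hp1, sub_zero]

lemma ent_eq_mi_add_cent (q : ℕ) (p : Ω → ℝ) (X : Ω → α) (Y : Ω → β) :
    ent q p X = mi q p X Y + cent q p X Y := by
  rw [mi, cent]
  ring

lemma cent_le_cent_of_factorsThrough_left (hq : 1 < q) (hp : ∀ ω, 0 ≤ p ω) {X : Ω → α}
    {X' : Ω → β} (hX : X'.FactorsThrough X) (Y : Ω → γ) : cent q p X' Y ≤ cent q p X Y := by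
  have h : ent q p (fun ω => (X' ω, Y ω)) ≤ ent q p fun ω => (X ω, Y ω) :=
    ent_le_of_factorsThrough hq hp fun _ _ h =>
      Prod.ext (hX (Prod.ext_iff.1 h).1) (Prod.ext_iff.1 h).2
  exact sub_le_sub_right h _

lemma cent_triangle (hq : 1 < q) (hp : ∀ ω, 0 ≤ p ω) (X : Ω → α) (Y : Ω → β) (Z : Ω → γ) :
    cent q p X Y ≤ cent q p X Z + cent q p Z Y := by
  have h := ent_submodular hq hp (X := fun ω => (X ω, Z ω)) (Y := fun ω => (Z ω, Y ω))
    (J := fun ω => (X ω, Y ω)) (Z := Z) (fun _ _ h => congrArg (fun v => (v.1.1, v.2.2)) h)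
    (fun _ _ h => congrArg Prod.snd h) fun _ _ h => congrArg Prod.fst h
  simp only [cent]
  linarith

lemma cent_eq_zero_of_factorsThrough (hq : 1 < q) (hp : ∀ ω, 0 ≤ p ω) {X : Ω → α} {Y : Ω → β}
    (h : X.FactorsThrough Y) : cent q p X Y = 0 :=
  (cent_nonneg hq hp X Y).antisymm' <| sub_nonpos.2 <|
    ent_le_of_factorsThrough hq hp fun _ _ hY => Prod.ext (h hY) hY

lemma cent_le_cent_of_factorsThrough_right (hq : 1 < q) (hp : ∀ ω, 0 ≤ p ω) (X : Ω → α)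
    {Y : Ω → β} {Y' : Ω → γ} (hY : Y'.FactorsThrough Y) : cent q p X Y ≤ cent q p X Y' := by
  simpa only [cent_eq_zero_of_factorsThrough hq hp hY, add_zero] using cent_triangle hq hp X Y Y'

lemma cent_eq_zero_of_factorsThrough_left (hq : 1 < q) (hp : ∀ ω, 0 ≤ p ω) {X : Ω → α}
    {X' : Ω → β} {Y : Ω → γ} (hX : X'.FactorsThrough X) (h : cent q p X Y = 0) :
    cent q p X' Y = 0 :=
  le_antisymm (h ▸ cent_le_cent_of_factorsThrough_left hq hp hX Y) (cent_nonneg hq hp X' Y)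

lemma cent_eq_zero_of_factorsThrough_right (hq : 1 < q) (hp : ∀ ω, 0 ≤ p ω) {X : Ω → α}
    {Y : Ω → β} {Y' : Ω → γ} (hY : Y'.FactorsThrough Y) (h : cent q p X Y' = 0) :
    cent q p X Y = 0 :=
  le_antisymm (h ▸ cent_le_cent_of_factorsThrough_right hq hp X hY) (cent_nonneg hq hp X Y)

lemma cent_prodMk_le (hq : 1 < q) (hp : ∀ ω, 0 ≤ p ω) (X : Ω → α) (Y : Ω → β) (Z : Ω → γ) :
    cent q p (fun ω => (X ω, Y ω)) Z ≤ cent q p X Z + cent q p Y Z :=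
  sub_nonneg.1 (cmi_nonneg hq hp X Y Z)

lemma mi_comm (hq : 1 < q) (hp : ∀ ω, 0 ≤ p ω) (X : Ω → α) (Y : Ω → β) :
    mi q p X Y = mi q p Y X := by
  have hXY : ent q p (fun ω => (X ω, Y ω)) = ent q p fun ω => (Y ω, X ω) :=
    ent_congr_of_factorsThrough hq hp (fun _ _ h => congrArg Prod.swap h)
      fun _ _ h => congrArg Prod.swap h
  rw [mi, mi, hXY, add_comm (ent q p X)]

lemma mi_le_ent (hq : 1 < q) (hp : ∀ ω, 0 ≤ p ω) (X : Ω → α) (Y : Ω → β) :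
    mi q p X Y ≤ ent q p X :=
  (le_add_of_nonneg_right (cent_nonneg hq hp X Y)).trans_eq (ent_eq_mi_add_cent q p X Y).symm

lemma mi_le_mi_of_factorsThrough_left (hq : 1 < q) (hp : ∀ ω, 0 ≤ p ω) {X : Ω → α} {X' : Ω → β}
    (hX : X'.FactorsThrough X) (Y : Ω → γ) : mi q p X' Y ≤ mi q p X Y := by
  have h := ent_submodular hq hp (X := fun ω => (X' ω, Y ω)) (Y := X)
    (J := fun ω => (X ω, Y ω)) (Z := X')
    (fun _ _ h => congrArg (fun v => (v.2, v.1.2)) h) (fun _ _ h => congrArg Prod.fst h) hX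
  simp only [mi]
  linarith

lemma mi_le_mi_of_factorsThrough (hq : 1 < q) (hp : ∀ ω, 0 ≤ p ω) {X : Ω → α} {X' : Ω → β}
    {Y : Ω → γ} {Y' : Ω → δ} (hX : X'.FactorsThrough X) (hY : Y'.FactorsThrough Y) :
    mi q p X' Y' ≤ mi q p X Y :=
  calc mi q p X' Y' ≤ mi q p X Y' := mi_le_mi_of_factorsThrough_left hq hp hX Y'
    _ = mi q p Y' X := mi_comm hq hp X Y'
    _ ≤ mi q p Y X := mi_le_mi_of_factorsThrough_left hq hp hY X
    _ = mi q p X Y := mi_comm hq hp Y X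

lemma mi_eq_zero_of_factorsThrough_right (hq : 1 < q) (hp : ∀ ω, 0 ≤ p ω) (hp1 : ∑ ω, p ω = 1)
    {X : Ω → α} {Y : Ω → β} {Y' : Ω → γ} (hY : Y'.FactorsThrough Y) (h : mi q p X Y = 0) :
    mi q p X Y' = 0 :=
  le_antisymm (h ▸ mi_le_mi_of_factorsThrough hq hp (fun _ _ h => h) hY)
    (mi_nonneg hq hp hp1 X Y')

lemma mi_eq_zero_of_ent_triple_eq (hq : 1 < q) (hp : ∀ ω, 0 ≤ p ω) (hp1 : ∑ ω, p ω = 1)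
    {X : Ω → α} {Y : Ω → β} {Z : Ω → γ}
    (h : ent q p (fun ω => (X ω, Y ω, Z ω)) = ent q p X + ent q p Y + ent q p Z) :
    mi q p (fun ω => (Z ω, Y ω)) X = 0 := by
  refine le_antisymm ?_ (mi_nonneg hq hp hp1 _ _)
  have hXYZ : ent q p (fun ω => (X ω, Y ω, Z ω)) ≤ ent q p fun ω => ((Z ω, Y ω), X ω) :=
    ent_le_of_factorsThrough hq hp fun _ _ h => congrArg (fun v => (v.2, v.1.2, v.1.1)) h
  rw [mi]
  linarith [ent_prodMk_le hq hp hp1 Z Y]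

lemma mi_prodMk_le_mi_add_cent (hq : 1 < q) (hp : ∀ ω, 0 ≤ p ω) (X : Ω → α) (Y : Ω → β)
    (Z : Ω → γ) : mi q p X (fun ω => (Z ω, Y ω)) ≤ mi q p X Y + cent q p Z Y := by
  have h : ent q p (fun ω => (X ω, Y ω)) ≤ ent q p fun ω => (X ω, (Z ω, Y ω)) :=
    ent_le_of_factorsThrough hq hp fun _ _ h => congrArg (fun v => (v.1, v.2.2)) h
  simp only [mi, cent]
  linarith

lemma mi_prodMk_le_mi_add_mi (hq : 1 < q) (hp : ∀ ω, 0 ≤ p ω) (hp1 : ∑ ω, p ω = 1) (X : Ω → α)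
    (Y : Ω → β) (Z : Ω → γ) :
    mi q p X (fun ω => (Y ω, Z ω)) ≤ mi q p X Y + mi q p (fun ω => (X ω, Y ω)) Z := by
  have hYZ := ent_prodMk_le hq hp hp1 Y Z
  have hassoc : ent q p (fun ω => ((X ω, Y ω), Z ω)) ≤ ent q p fun ω => (X ω, (Y ω, Z ω)) :=
    ent_le_of_factorsThrough hq hp fun _ _ h => congrArg (fun v => ((v.1, v.2.1), v.2.2)) h
  simp only [mi]
  linarith

lemma mi_prodMk_le_mi_add_cmi (hq : 1 < q) (hp : ∀ ω, 0 ≤ p ω) (X : Ω → α) (Y : Ω → β)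
    (Z : Ω → γ) : mi q p X (fun ω => (Y ω, Z ω)) ≤ mi q p X Y + cmi q p X Z Y := by
  have hYZ : ent q p (fun ω => (Y ω, Z ω)) ≤ ent q p fun ω => (Z ω, Y ω) :=
    ent_le_of_factorsThrough hq hp fun _ _ h => congrArg Prod.swap h
  have hXYZ : ent q p (fun ω => ((X ω, Z ω), Y ω)) ≤ ent q p fun ω => (X ω, (Y ω, Z ω)) :=
    ent_le_of_factorsThrough hq hp fun _ _ h => congrArg (fun v => ((v.1, v.2.2), v.2.1)) h
  simp only [mi, cmi, cent]
  linarith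

lemma cmi_prodMk_right_le (hq : 1 < q) (hp : ∀ ω, 0 ≤ p ω) (X : Ω → α) (Y : Ω → β)
    (Z : Ω → γ) (T : Ω → δ) :
    cmi q p X Y (fun ω => (Z ω, T ω)) ≤ cmi q p (fun ω => (X ω, T ω)) Y Z := by
  have hYZT := ent_submodular hq hp (X := fun ω => (Y ω, Z ω)) (Y := fun ω => (Z ω, T ω))
    (J := fun ω => (Y ω, (Z ω, T ω))) (Z := Z)
    (fun _ _ h => congrArg (fun v => (v.1.1, v.2)) h) (fun _ _ h => congrArg Prod.snd h)
    fun _ _ h => congrArg Prod.fst h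
  have hXZT : ent q p (fun ω => (X ω, (Z ω, T ω))) ≤ ent q p fun ω => ((X ω, T ω), Z ω) :=
    ent_le_of_factorsThrough hq hp fun _ _ h => congrArg (fun v => (v.1.1, (v.2, v.1.2))) h
  have hXYZT : ent q p (fun ω => (((X ω, T ω), Y ω), Z ω)) ≤
      ent q p fun ω => ((X ω, Y ω), (Z ω, T ω)) :=
    ent_le_of_factorsThrough hq hp fun _ _ h =>
      congrArg (fun v => (((v.1.1, v.2.2), v.1.2), v.2.1)) h
  simp only [cmi, cent]
  linarith

lemma cmi_le_cmi_add_cent (hq : 1 < q) (hp : ∀ ω, 0 ≤ p ω) (X : Ω → α) (X' : Ω → β)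
    (Y : Ω → γ) (Z : Ω → δ) :
    cmi q p X' Y Z ≤ cmi q p X Y Z + cent q p X' (fun ω => (Z ω, X ω)) := by
  have hYZ := ent_submodular hq hp (X := fun ω => ((X' ω, Y ω), Z ω))
    (Y := fun ω => (X' ω, (Z ω, X ω))) (J := fun ω => ((X ω, Y ω), Z ω))
    (Z := fun ω => (X' ω, Z ω))
    (fun _ _ h => congrArg (fun v => ((v.2.2.2, v.1.1.2), v.1.2)) h)
    (fun _ _ h => congrArg (fun v => (v.1.1, v.2)) h)
    fun _ _ h => congrArg (fun v => (v.1, v.2.1)) h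
  have hXZ : ent q p (fun ω => (Z ω, X ω)) ≤ ent q p fun ω => (X ω, Z ω) :=
    ent_le_of_factorsThrough hq hp fun _ _ h => congrArg Prod.swap h
  simp only [cmi, cent]
  linarith

lemma cmi_le_mi_add_cent (hq : 1 < q) (hp : ∀ ω, 0 ≤ p ω) (hp1 : ∑ ω, p ω = 1) (X : Ω → α)
    (Y : Ω → β) (Z : Ω → γ) : cmi q p X Y Z ≤ mi q p X Y + cent q p Z Y := by
  have hXZ := ent_prodMk_le hq hp hp1 X Z
  have hYZ : ent q p (fun ω => (Y ω, Z ω)) ≤ ent q p fun ω => (Z ω, Y ω) :=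
    ent_le_of_factorsThrough hq hp fun _ _ h => congrArg Prod.swap h
  have hXYZ : ent q p (fun ω => (X ω, Y ω)) ≤ ent q p fun ω => ((X ω, Y ω), Z ω) :=
    ent_le_of_factorsThrough hq hp fun _ _ h => congrArg Prod.fst h
  simp only [cmi, mi, cent]
  linarith

end Shannon

section Families

variable {q : ℕ} {p : Ω → ℝ} {ι α β : Type} [DecidableEq ι] [Fintype α] [DecidableEq α]
  [Fintype β] [DecidableEq β]

lemma cent_subtuple_le_sum (hq : 1 < q) (hp : ∀ ω, 0 ≤ p ω) (X : ι → Ω → α) (Y : Ω → β)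
    (T : Finset ι) : cent q p (subtuple X T) Y ≤ ∑ k ∈ T, cent q p (X k) Y := by
  induction T using Finset.induction_on with
  | empty =>
    exact (cent_eq_zero_of_factorsThrough hq hp fun _ _ _ => Subsingleton.elim _ _).le
  | insert k T hk ih =>
    rw [sum_insert hk]
    calc cent q p (subtuple X (insert k T)) Y
        ≤ cent q p (fun ω => (X k ω, subtuple X T ω)) Y :=
          cent_le_cent_of_factorsThrough_left hq hp
            (fun _ _ h => by simp_all [subtuple_eq_subtuple_iff]) Y
      _ ≤ cent q p (X k) Y + cent q p (subtuple X T) Y := cent_prodMk_le hq hp _ _ _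
      _ ≤ _ := by gcongr

lemma ent_subtuple_le_sum (hq : 1 < q) (hp : ∀ ω, 0 ≤ p ω) (hp1 : ∑ ω, p ω = 1)
    (X : ι → Ω → α) (T : Finset ι) : ent q p (subtuple X T) ≤ ∑ k ∈ T, ent q p (X k) := by
  simpa only [cent_const hq hp hp1] using cent_subtuple_le_sum hq hp X (fun _ => ()) T

lemma mi_subtuple_le_sum [Fintype ι] (hq : 1 < q) (hp : ∀ ω, 0 ≤ p ω) (hp1 : ∑ ω, p ω = 1)
    (W : ι → Ω → α) (G : Ω → β) (T : Finset ι) :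
    mi q p (subtuple W T) G ≤
      ∑ k ∈ T, mi q p (W k) (fun ω => (subtuple W (univ.erase k) ω, G ω)) := by
  induction T using Finset.induction_on with
  | empty =>
    simpa only [sum_empty] using
      (mi_le_ent hq hp _ G).trans (ent_subtuple_le_sum hq hp hp1 W ∅)
  | insert k T hk ih =>
    rw [sum_insert hk]
    calc mi q p (subtuple W (insert k T)) G
        ≤ mi q p (fun ω => (subtuple W T ω, W k ω)) G :=
          mi_le_mi_of_factorsThrough_left hq hp
            (fun _ _ h => by simp_all [subtuple_eq_subtuple_iff]) G
      _ = mi q p G (fun ω => (subtuple W T ω, W k ω)) := mi_comm hq hp _ _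
      _ ≤ mi q p G (subtuple W T) + mi q p (fun ω => (G ω, subtuple W T ω)) (W k) :=
          mi_prodMk_le_mi_add_mi hq hp hp1 _ _ _
      _ = mi q p (W k) (fun ω => (G ω, subtuple W T ω)) + mi q p (subtuple W T) G := by
          rw [mi_comm hq hp G, mi_comm hq hp _ (W k), add_comm]
      _ ≤ _ := by
          refine add_le_add (mi_le_mi_of_factorsThrough hq hp (fun _ _ h => h) fun a b h => ?_) ih
          simp only [Prod.mk.injEq, subtuple_eq_subtuple_iff, mem_erase] at h ⊢
          exact ⟨h.2, fun i hi => h.1 i ⟨ne_of_mem_of_not_mem hi hk, mem_univ i⟩⟩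

variable [Fintype ι] {W : ι → Ω → α}

lemma IdentDist.mi_message_eq {G G' : Ω → β} (W : ι → Ω → α)
    (h : IdentDist p (fun ω => (G ω, fun k => W k ω)) (fun ω => (G' ω, fun k => W k ω)))
    (T : Finset ι) (k : ι) :
    mi q p (W k) (fun ω => (subtuple W T ω, G ω)) =
      mi q p (W k) (fun ω => (subtuple W T ω, G' ω)) :=
  h.mi_comp_eq (fun v => v.2 k) fun v => ((fun i : T => v.2 i), v.1)

lemma ent_le_ent_subtuple_prodMk_compl (hq : 1 < q) (hp : ∀ ω, 0 ≤ p ω) (W : ι → Ω → α)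
    (T : Finset ι) :
    ent q p (fun ω k => W k ω) ≤ ent q p fun ω => (subtuple W T ω, subtuple W Tᶜ ω) :=
  ent_le_of_factorsThrough hq hp fun a b h => by
    simp only [Prod.mk.injEq, subtuple_eq_subtuple_iff, mem_compl] at h
    exact funext fun k => (em (k ∈ T)).elim (h.1 k) (h.2 k)

lemma mi_subtuple_compl_eq_zero (hq : 1 < q) (hp : ∀ ω, 0 ≤ p ω) (hp1 : ∑ ω, p ω = 1)
    (hW : ent q p (fun ω k => W k ω) = ∑ k, ent q p (W k)) (T : Finset ι) :
    mi q p (subtuple W T) (subtuple W Tᶜ) = 0 := by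
  refine le_antisymm ?_ (mi_nonneg hq hp hp1 _ _)
  rw [mi]
  linarith [ent_le_ent_subtuple_prodMk_compl hq hp W T, ent_subtuple_le_sum hq hp hp1 W T,
    ent_subtuple_le_sum hq hp hp1 W Tᶜ, sum_add_sum_compl T fun k => ent q p (W k)]

lemma ent_subtuple_eq_sum (hq : 1 < q) (hp : ∀ ω, 0 ≤ p ω) (hp1 : ∑ ω, p ω = 1)
    (hW : ent q p (fun ω k => W k ω) = ∑ k, ent q p (W k)) (T : Finset ι) :
    ent q p (subtuple W T) = ∑ k ∈ T, ent q p (W k) := by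
  refine (ent_subtuple_le_sum hq hp hp1 W T).antisymm ?_
  linarith [ent_le_ent_subtuple_prodMk_compl hq hp W T, ent_subtuple_le_sum hq hp hp1 W Tᶜ,
    ent_prodMk_le hq hp hp1 (subtuple W T) (subtuple W Tᶜ),
    sum_add_sum_compl T fun k => ent q p (W k)]

lemma mi_message_eq_zero_of_decodable (hq : 1 < q) (hp : ∀ ω, 0 ≤ p ω) (hp1 : ∑ ω, p ω = 1)
    (hW : ent q p (fun ω k => W k ω) = ∑ k, ent q p (W k)) {T : Finset ι} {Y : Ω → β}
    (hdec : cent q p (subtuple W T) Y = 0) (hsec : mi q p (subtuple W Tᶜ) Y = 0)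
    {k : ι} (hk : k ∉ T) :
    mi q p (W k) (fun ω => (subtuple W (univ.erase k) ω, Y ω)) = 0 := by
  refine le_antisymm ?_ (mi_nonneg hq hp hp1 _ _)
  have hrest : mi q p (W k) (subtuple W (Tᶜ.erase k)) ≤ 0 :=
    (mi_le_mi_of_factorsThrough hq hp
      (fun a b h => subtuple_eq_subtuple_iff.1 h k (mem_singleton_self k)) fun a b h => by
        simp only [subtuple_eq_subtuple_iff, mem_erase, mem_compl, mem_singleton] at h ⊢
        exact fun i hi => h i hi.1).trans_eq (mi_subtuple_compl_eq_zero hq hp hp1 hW {k})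
  have hpair : mi q p (fun ω => (W k ω, subtuple W (Tᶜ.erase k) ω)) Y ≤ 0 := by
    refine (mi_le_mi_of_factorsThrough_left hq hp (fun a b h => ?_) Y).trans_eq hsec
    simp only [Prod.mk.injEq, subtuple_eq_subtuple_iff, mem_erase, mem_compl] at h ⊢
    exact ⟨h k hk, fun i hi => h i hi.2⟩
  calc mi q p (W k) (fun ω => (subtuple W (univ.erase k) ω, Y ω))
      ≤ mi q p (W k) (fun ω => (subtuple W T ω, (subtuple W (Tᶜ.erase k) ω, Y ω))) := by
        refine mi_le_mi_of_factorsThrough hq hp (fun _ _ h => h) fun a b h => ?_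
        simp only [Prod.mk.injEq, subtuple_eq_subtuple_iff, mem_erase, mem_compl] at h ⊢
        exact ⟨fun i hi => (em (i ∈ T)).elim (h.1 i) fun hiT => h.2.1 i ⟨hi.1, hiT⟩, h.2.2⟩
    _ ≤ mi q p (W k) (fun ω => (subtuple W (Tᶜ.erase k) ω, Y ω)) +
          cent q p (subtuple W T) (fun ω => (subtuple W (Tᶜ.erase k) ω, Y ω)) :=
        mi_prodMk_le_mi_add_cent hq hp _ _ _
    _ ≤ mi q p (W k) (subtuple W (Tᶜ.erase k)) +
          mi q p (fun ω => (W k ω, subtuple W (Tᶜ.erase k) ω)) Y + cent q p (subtuple W T) Y :=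
        add_le_add (mi_prodMk_le_mi_add_mi hq hp hp1 _ _ _)
          (cent_le_cent_of_factorsThrough_right hq hp _ fun _ _ h => congrArg Prod.snd h)
    _ ≤ 0 := by linarith

lemma mi_tuple_eq_zero (hq : 1 < q) (hp : ∀ ω, 0 ≤ p ω) (hp1 : ∑ ω, p ω = 1) {G : Ω → β}
    (h : ∀ k, mi q p (W k) (fun ω => (subtuple W (univ.erase k) ω, G ω)) = 0) :
    mi q p (fun ω k => W k ω) G = 0 := by
  refine le_antisymm ?_ (mi_nonneg hq hp hp1 _ _)
  calc mi q p (fun ω k => W k ω) G ≤ mi q p (subtuple W univ) G :=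
        mi_le_mi_of_factorsThrough_left hq hp
          (fun _ _ h => funext fun k => subtuple_eq_subtuple_iff.1 h k (mem_univ k)) G
    _ ≤ 0 := (mi_subtuple_le_sum hq hp hp1 W G univ).trans_eq (sum_eq_zero fun k _ => h k)

end Families

section Retrieval

variable {q : ℕ} {p : Ω → ℝ} {MT QT AT FT ST : Type} [Fintype MT] [DecidableEq MT] [Fintype QT]
  [DecidableEq QT] [Fintype AT] [DecidableEq AT] [Fintype FT] [DecidableEq FT] [Fintype ST]
  [DecidableEq ST]

lemma cent_answer_query_le (hq : 1 < q) (hp : ∀ ω, 0 ≤ p ω) (hp1 : ∑ ω, p ω = 1) (W : Ω → MT)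
    (S : Ω → ST) (Q : Ω → QT) (A : Ω → AT) :
    cent q p A Q ≤ mi q p W (fun ω => (Q ω, A ω)) + ent q p S +
      cent q p A (fun ω => (Q ω, W ω, S ω)) := by
  have hQW := ent_prodMk_le hq hp hp1 Q W
  have hQWS := ent_prodMk_le hq hp hp1 (fun ω => (Q ω, W ω)) S
  have hassoc : ent q p (fun ω => (Q ω, W ω, S ω)) ≤ ent q p fun ω => ((Q ω, W ω), S ω) :=
    ent_le_of_factorsThrough hq hp fun _ _ h => congrArg (fun v => (v.1.1, v.1.2, v.2)) h
  have hWQA : ent q p (fun ω => (W ω, Q ω, A ω)) ≤ ent q p fun ω => (A ω, Q ω, W ω, S ω) :=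
    ent_le_of_factorsThrough hq hp fun _ _ h => congrArg (fun v => (v.2.2.1, v.2.1, v.1)) h
  have hAQ : ent q p (fun ω => (A ω, Q ω)) ≤ ent q p fun ω => (Q ω, A ω) :=
    ent_le_of_factorsThrough hq hp fun _ _ h => congrArg Prod.swap h
  simp only [cent, mi]
  linarith

lemma mi_answer_randomness_le (hq : 1 < q) (hp : ∀ ω, 0 ≤ p ω) (hp1 : ∑ ω, p ω = 1) (W : Ω → MT)
    (F : Ω → FT) (S : Ω → ST) (Q : Ω → QT) (A : Ω → AT) :
    mi q p W (fun ω => (A ω, F ω)) ≤ mi q p W (fun ω => (Q ω, A ω)) +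
      (mi q p (fun ω => (W ω, S ω)) F + cent q p Q F + cent q p A (fun ω => (Q ω, W ω, S ω))) :=
  calc mi q p W (fun ω => (A ω, F ω))
      ≤ mi q p W (fun ω => ((Q ω, A ω), F ω)) :=
        mi_le_mi_of_factorsThrough hq hp (fun _ _ h => h)
          fun _ _ h => congrArg (fun v => (v.1.2, v.2)) h
    _ ≤ mi q p W (fun ω => (Q ω, A ω)) + cmi q p W F (fun ω => (Q ω, A ω)) :=
        mi_prodMk_le_mi_add_cmi hq hp _ _ _
    _ ≤ _ := by
        gcongr
        calc cmi q p W F (fun ω => (Q ω, A ω))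
            ≤ cmi q p (fun ω => (W ω, A ω)) F Q := cmi_prodMk_right_le hq hp _ _ _ _
          _ ≤ cmi q p (fun ω => (W ω, S ω)) F Q +
                cent q p (fun ω => (W ω, A ω)) (fun ω => (Q ω, W ω, S ω)) :=
              cmi_le_cmi_add_cent hq hp _ _ _ _
          _ ≤ _ := by
              refine add_le_add (cmi_le_mi_add_cent hq hp hp1 _ _ _)
                ((cent_prodMk_le hq hp _ _ _).trans_eq ?_)
              rw [cent_eq_zero_of_factorsThrough (X := W) hq hp
                fun _ _ h => congrArg (fun v => v.2.1) h, zero_add]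

theorem ent_le_card_sub_one_mul_ent {κ XT : Type} [Fintype κ] [DecidableEq κ] [Nonempty κ]
    [Fintype XT] [DecidableEq XT] (hq : 1 < q) (hp : ∀ ω, 0 ≤ p ω) (hp1 : ∑ ω, p ω = 1)
    {W : Ω → MT} {F : Ω → FT} {S : Ω → ST} {Q : κ → Ω → QT} {A : κ → Ω → AT} {X : Ω → XT}
    (hX : X.FactorsThrough W) (hF : mi q p (fun ω => (W ω, S ω)) F = 0)
    (hQ : ∀ n, cent q p (Q n) F = 0)
    (hA : ∀ n, cent q p (A n) (fun ω => (Q n ω, W ω, S ω)) = 0)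
    (hW : ∀ n, mi q p W (fun ω => (Q n ω, A n ω)) = 0)
    (hdec : cent q p X (fun ω => ((fun n => A n ω), F ω)) = 0) :
    ent q p X ≤ (Fintype.card κ - 1) * ent q p S := by
  obtain ⟨m⟩ := ‹Nonempty κ›
  have cent_answer_le (n : κ) : cent q p (A n) F ≤ ent q p S := by
    linarith [cent_triangle hq hp (A n) F (Q n), cent_answer_query_le hq hp hp1 W S (Q n) (A n),
      hQ n, hA n, hW n]
  have mi_answer_le : mi q p X (fun ω => (A m ω, F ω)) ≤ 0 := by
    linarith [mi_le_mi_of_factorsThrough_left hq hp hX fun ω => (A m ω, F ω),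
      mi_answer_randomness_le hq hp hp1 W F S (Q m) (A m), hQ m, hA m, hW m]
  set rest := subtuple A (univ.erase m)
  have cent_rest_le : cent q p rest F ≤ (Fintype.card κ - 1) * ent q p S :=
    calc cent q p rest F ≤ ∑ n ∈ univ.erase m, cent q p (A n) F :=
          cent_subtuple_le_sum hq hp A F _
      _ ≤ ∑ _n ∈ univ.erase m, ent q p S := sum_le_sum fun n _ => cent_answer_le n
      _ = (Fintype.card κ - 1) * ent q p S := by
          rw [sum_const, nsmul_eq_mul, cast_card_erase_of_mem (mem_univ m), card_univ]
  calc ent q p X = mi q p X (fun ω => ((fun n => A n ω), F ω)) := by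
        rw [ent_eq_mi_add_cent q p X fun ω => ((fun n => A n ω), F ω), hdec, add_zero]
    _ ≤ mi q p X (fun ω => (rest ω, (A m ω, F ω))) := by
        refine mi_le_mi_of_factorsThrough hq hp (fun _ _ h => h) fun a b h => ?_
        simp only [rest, Prod.mk.injEq, subtuple_eq_subtuple_iff, mem_erase, mem_univ,
          and_true] at h ⊢
        refine ⟨funext fun n => ?_, h.2.2⟩
        rcases eq_or_ne n m with rfl | hn
        exacts [h.2.1, h.1 n hn]
    _ ≤ mi q p X (fun ω => (A m ω, F ω)) + cent q p rest (fun ω => (A m ω, F ω)) :=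
        mi_prodMk_le_mi_add_cent hq hp _ _ _
    _ ≤ 0 + cent q p rest F := add_le_add mi_answer_le
        (cent_le_cent_of_factorsThrough_right hq hp _ fun _ _ h => congrArg Prod.snd h)
    _ ≤ (Fintype.card κ - 1) * ent q p S := by rwa [zero_add]

end Retrieval

theorem common_randomness_converse_general
    {ι κ MT QT AT FT ST : Type} [Fintype ι] [DecidableEq ι] [Fintype κ] [DecidableEq κ]
    [Nonempty κ] [Fintype MT] [DecidableEq MT] [Fintype QT] [DecidableEq QT]
    [Fintype AT] [DecidableEq AT] [Fintype FT] [DecidableEq FT]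
    [Fintype ST] [DecidableEq ST]
    {P q : ℕ} (hP : P < Fintype.card ι) (hq : 1 < q)
    {p : Ω → ℝ} (hp : ∀ ω, 0 ≤ p ω) (hp1 : ∑ ω, p ω = 1)
    {W : ι → Ω → MT} {F : Ω → FT} {S : Ω → ST}
    {Q : Finset ι → κ → Ω → QT} {A : Finset ι → κ → Ω → AT}
    (hW : ent q p (fun ω k => W k ω) = ∑ k, ent q p (W k))
    (hF : mi q p (fun ω => ((fun k => W k ω), S ω)) F = 0)
    (hQdet : ∀ T : Finset ι, T.card = P → cent q p (fun ω n => Q T n ω) F = 0)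
    (hAdet : ∀ T : Finset ι, T.card = P → ∀ n,
      cent q p (A T n) (fun ω => (Q T n ω, (fun k => W k ω), S ω)) = 0)
    (hrel : ∀ T : Finset ι, T.card = P →
      cent q p (subtuple W T) (fun ω => ((fun n => A T n ω), F ω)) = 0)
    (hupriv : ∀ n, ∀ T₁ T₂ : Finset ι, T₁.card = P → T₂.card = P →
      IdentDist p (fun ω => (Q T₁ n ω, A T₁ n ω, fun k => W k ω))
        (fun ω => (Q T₂ n ω, A T₂ n ω, fun k => W k ω)))
    (hdpriv : ∀ T : Finset ι, T.card = P →
      mi q p (subtuple W Tᶜ) (fun ω => ((fun n => Q T n ω), (fun n => A T n ω), F ω)) = 0)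
    {T : Finset ι} (hT : T.card = P) :
    ∑ k ∈ T, ent q p (W k) ≤ (Fintype.card κ - 1) * ent q p S := by
  have mi_message_eq_zero (T' : Finset ι) (hT' : T'.card = P) (k : ι) (hk : k ∉ T') (n : κ) :
      mi q p (W k) (fun ω => (subtuple W (univ.erase k) ω, Q T' n ω, A T' n ω)) = 0 := by
    have hdec : cent q p (subtuple W T')
        (fun ω => ((fun n => Q T' n ω), (fun n => A T' n ω), F ω)) = 0 :=
      cent_eq_zero_of_factorsThrough_right hq hp (fun _ _ h => congrArg Prod.snd h) (hrel T' hT')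
    exact mi_eq_zero_of_factorsThrough_right hq hp hp1
      (fun _ _ h => congrArg (fun v => (v.1, v.2.1 n, v.2.2.1 n)) h)
      (mi_message_eq_zero_of_decodable hq hp hp1 hW hdec (hdpriv T' hT') hk)
  have mi_messages_eq_zero (n : κ) :
      mi q p (fun ω k => W k ω) (fun ω => (Q T n ω, A T n ω)) = 0 := by
    refine mi_tuple_eq_zero hq hp hp1 fun k => ?_
    obtain ⟨T', hkT', hT'⟩ : ∃ T' ⊆ univ.erase k, T'.card = P :=
      exists_subset_card_eq (by rw [card_erase_of_mem (mem_univ k), card_univ]; omega)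
    have hk : k ∉ T' := fun h => notMem_erase k univ (hkT' h)
    have hpriv := (hupriv n T T' hT hT').comp fun v => ((v.1, v.2.1), v.2.2)
    rw [hpriv.mi_message_eq W (univ.erase k) k]
    exact mi_message_eq_zero T' hT' k hk n
  have cent_query_eq_zero (n : κ) : cent q p (Q T n) F = 0 :=
    cent_eq_zero_of_factorsThrough_left hq hp (fun _ _ h => congrFun h n) (hQdet T hT)
  rw [← ent_subtuple_eq_sum hq hp hp1 hW]
  exact ent_le_card_sub_one_mul_ent (W := fun ω k => W k ω) (X := subtuple W T) hq hp hp1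
    (fun _ _ h => funext fun k => congrFun h k) hF cent_query_eq_zero (hAdet T hT)
    mi_messages_eq_zero (hrel T hT)

theorem common_randomness_converse
    {Ω MT QT AT FT ST : Type}
    [Fintype Ω] [Fintype MT] [DecidableEq MT] [Fintype QT] [DecidableEq QT]
    [Fintype AT] [DecidableEq AT] [Fintype FT] [DecidableEq FT]
    [Fintype ST] [DecidableEq ST]
    (N K P L q : ℕ) (hN : 2 ≤ N) (hK : 2 ≤ K) (hP1 : 1 ≤ P) (hP2 : P ≤ K - 1)
    (hL : 1 ≤ L) (hq : IsPrimePow q)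
    (p : Ω → ℝ) (hp0 : ∀ ω, 0 ≤ p ω) (hp1 : (∑ ω, p ω) = 1)
    (W : Fin K → Ω → MT) (F : Ω → FT) (S : Ω → ST)
    (Q : Finset (Fin K) → Fin N → Ω → QT)
    (A : Finset (Fin K) → Fin N → Ω → AT)
    (hWk : ∀ k, ent q p (W k) = (L : ℝ))
    (hWall : ent q p (fun ω (k : Fin K) => W k ω) = (K : ℝ) * L)
    (hind : ent q p (fun ω => (F ω, S ω, fun k : Fin K => W k ω)) =
      ent q p F + ent q p S + ent q p (fun ω (k : Fin K) => W k ω))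
    (hQdet : ∀ 𝒫₀ : Finset (Fin K), 𝒫₀.card = P →
      cent q p (fun ω (n : Fin N) => Q 𝒫₀ n ω) F = 0)
    (hAdet : ∀ 𝒫₀ : Finset (Fin K), 𝒫₀.card = P → ∀ n : Fin N,
      cent q p (A 𝒫₀ n) (fun ω => (Q 𝒫₀ n ω, (fun k : Fin K => W k ω), S ω)) = 0)
    (hrel : ∀ 𝒫₀ : Finset (Fin K), 𝒫₀.card = P →
      cent q p (fun ω (k : {x : Fin K // x ∈ 𝒫₀}) => W k.1 ω)
        (fun ω => ((fun n : Fin N => A 𝒫₀ n ω), F ω)) = 0)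
    (hupriv : ∀ (n : Fin N) (𝒫₁ 𝒫₂ : Finset (Fin K)), 𝒫₁.card = P → 𝒫₂.card = P →
      IdentDist p
        (fun ω => (Q 𝒫₁ n ω, A 𝒫₁ n ω, (fun k : Fin K => W k ω), S ω))
        (fun ω => (Q 𝒫₂ n ω, A 𝒫₂ n ω, (fun k : Fin K => W k ω), S ω)))
    (hdpriv : ∀ 𝒫₀ : Finset (Fin K), 𝒫₀.card = P →
      mi q p (fun ω (k : {x : Fin K // x ∈ 𝒫₀ᶜ}) => W k.1 ω)
        (fun ω => ((fun n : Fin N => Q 𝒫₀ n ω), (fun n : Fin N => A 𝒫₀ n ω), F ω)) = 0)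
    : (P : ℝ) * L / ((N : ℝ) - 1) ≤ ent q p S := by
  obtain ⟨T, -, hT⟩ := exists_subset_card_eq (s := (univ : Finset (Fin K))) (n := P)
    (by rw [card_univ, Fintype.card_fin]; omega)
  have : Nonempty (Fin N) := ⟨⟨0, by omega⟩⟩
  have hbound := common_randomness_converse_general (T := T)
    (by rw [Fintype.card_fin]; omega) hq.one_lt hp0 hp1
    (by simp only [hWall, hWk, sum_const, card_univ, Fintype.card_fin, nsmul_eq_mul])
    (mi_eq_zero_of_ent_triple_eq hq.one_lt hp0 hp1 hind) hQdet hAdet hrel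
    (fun n T₁ T₂ h₁ h₂ => (hupriv n T₁ T₂ h₁ h₂).comp fun v => (v.1, v.2.1, v.2.2.1)) hdpriv hT
  rw [div_le_iff₀' (by rw [sub_pos, Nat.one_lt_cast]; omega)]
  simpa only [hWk, sum_const, hT, nsmul_eq_mul, Fintype.card_fin] using hbound

end MMSPIR
end

section
/- (Algebraic identity underlying Lemma 9: the achievable scheme uses exactly the minimal common randomness.) Let N ≥ 2, K ≥ 2, and P be integers with 1 ≤ P ≤ K−1, and let r be a positive real number satisfying (1 + 1/r)^P = N. Define D1 = Σ_{k=1}^{K} C(K,k)·r^{K−P−k}, U1 = Σ_{k=1}^{K−P} C(K−P,k)·r^{K−P−k}, and D2 = (1/(N−1))·Σ_{k=1}^{P} C(P,k)·r^{K−P−k} (integer powers of r, possibly negative). Then U1 + D2 = (D1 − U1)/(N−1); i.e., with message length L = (D1 − U1)/P, the total amount of common randomness of the scheme, U1 + D2, equals P·L/(N−1). -/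
open Finset

namespace MMSPIR

variable {Ω : Type} [Fintype Ω]

/-!
Put `x = 1 + 1 / r` and `e = K - P`. By the binomial theorem the sum over `k ∈ [1, n]` of
`C(n, k) * r ^ (e - k)` is `r ^ e * (x ^ n - 1)`. Since `x ^ P = N`, the sum in `D2` is
`(N - 1) * r ^ e`, so `U1 + D2 = r ^ e * x ^ (K - P)`, while
`D1 - U1 = r ^ e * x ^ (K - P) * (x ^ P - 1)`.
-/

theorem sum_Icc_one_choose_mul_pow {R : Type*} [Ring R] (x : R) (n : ℕ) :
    ∑ k ∈ Icc 1 n, (n.choose k : R) * x ^ k = (1 + x) ^ n - 1 := by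
  have binomial : (1 + x) ^ n = ∑ k ∈ range (n + 1), (n.choose k : R) * x ^ k := by
    rw [add_comm, (Commute.one_right x).add_pow]
    simp only [one_pow, mul_one, (Nat.cast_commute _ _).eq]
  rw [binomial, sum_range_eq_add_Ico _ n.add_one_pos, Nat.choose_zero_right, Nat.cast_one, pow_zero,
    mul_one, add_sub_cancel_left, Ico_add_one_right_eq_Icc]

theorem sum_Icc_one_choose_mul_zpow_sub {F : Type*} [DivisionRing F] {r : F} (hr : r ≠ 0)
    (e : ℤ) (n : ℕ) :
    ∑ k ∈ Icc 1 n, (n.choose k : F) * r ^ (e - k) = r ^ e * ((1 + 1 / r) ^ n - 1) := by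
  rw [← sum_Icc_one_choose_mul_pow, mul_sum]
  refine sum_congr rfl fun k _ => ?_
  rw [zpow_sub₀ hr, zpow_natCast, div_eq_mul_inv, one_div, inv_pow, ← mul_assoc, ← mul_assoc,
    (Nat.cast_commute _ _).eq]

theorem achievable_common_randomness_identity_general {F : Type*} [Field F] {r N : F}
    (hr : r ≠ 0) (hN : N ≠ 1) {K P : ℕ} (hPK : P ≤ K) (hroot : (1 + 1 / r) ^ P = N) (e : ℤ) :
    ∑ k ∈ Icc 1 (K - P), ((K - P).choose k : F) * r ^ (e - k) +
        1 / (N - 1) * ∑ k ∈ Icc 1 P, (P.choose k : F) * r ^ (e - k) =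
      (∑ k ∈ Icc 1 K, (K.choose k : F) * r ^ (e - k) -
        ∑ k ∈ Icc 1 (K - P), ((K - P).choose k : F) * r ^ (e - k)) / (N - 1) := by
  have hN1 : N - 1 ≠ 0 := sub_ne_zero.mpr hN
  have hpow : (1 + 1 / r) ^ K = (1 + 1 / r) ^ (K - P) * N := by
    rw [← hroot, ← pow_add, Nat.sub_add_cancel hPK]
  simp only [sum_Icc_one_choose_mul_zpow_sub hr, hroot, hpow]
  generalize (1 + 1 / r) ^ (K - P) = y
  calc r ^ e * (y - 1) + 1 / (N - 1) * (r ^ e * (N - 1))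
      = r ^ e * y := by field_simp; ring
    _ = (r ^ e * (y * N - 1) - r ^ e * (y - 1)) / (N - 1) := by field_simp; ring

theorem achievable_common_randomness_identity
    (N K P : ℕ) (hN : 2 ≤ N) (hK : 2 ≤ K) (hP1 : 1 ≤ P) (hP2 : P ≤ K - 1)
    (r : ℝ) (hr : 0 < r) (hroot : (1 + 1 / r) ^ P = (N : ℝ))
    (D1 U1 D2 : ℝ)
    (hD1 : D1 = ∑ k ∈ Finset.Icc 1 K, (K.choose k : ℝ) * r ^ ((K : ℤ) - P - k))
    (hU1 : U1 = ∑ k ∈ Finset.Icc 1 (K - P), ((K - P).choose k : ℝ) * r ^ ((K : ℤ) - P - k))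
    (hD2 : D2 = (1 / ((N : ℝ) - 1)) * ∑ k ∈ Finset.Icc 1 P, (P.choose k : ℝ) * r ^ ((K : ℤ) - P - k))
    : U1 + D2 = (D1 - U1) / ((N : ℝ) - 1) := by
  subst hD1 hU1 hD2
  have hN1 : (N : ℝ) ≠ 1 := by exact_mod_cast (by omega : N ≠ 1)
  exact achievable_common_randomness_identity_general hr.ne' hN1 (by omega) hroot _

end MMSPIR
end
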